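/- Let n ≥ 2 and let x_1,…,x_n be pairwise distinct strictly positive reals with ∑_k x_k = 1. Then for every q with 1 ≤ q ≤ n−1, (−1)^{n−q+1} · ∑_{k=1}^n (x_k^{q−1} · ln x_k) / P_k ≥ n^{n−q} / (q · C(n−1, q)), where P_k = ∏_{i≠k}(x_k − x_i) and C(n−1,q) is the binomial coefficient. (This is the lower bound ∂S/∂s_{n−q+1} ≥ n^{n−q}/(q·C(n−1,q)) for the derivatives of the Shannon entropy with respect to the elementary symmetric polynomials.) -/

import Mathlib

/-!
Up to the sign `(-1) ^ (n - q + 1)`, the sum is the divided difference of `t ^ (q - 1) * log t` at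
the `n` points `x k`, and the `(n - 1)`-st derivative of that function is a constant multiple of the
function `t ^ (-(n - q))`, which is convex on `(0, ∞)`. Divided differences satisfy a Jensen
inequality: if `f⁽ᵐ⁾` is convex, then the divided difference of `f` at `m + 1` points with mean `μ`
is at least `f⁽ᵐ⁾(μ) / m!`. Indeed, let `c` be the slope of a supporting line of `f⁽ᵐ⁾` at `μ`, and
apply the mean value theorem for divided differences to `f - c / (m + 1)! * t ^ (m + 1)`: the
divided difference of `t ^ (m + 1)` is the sum of the points, so it is determined by `μ`.
-/

open Finset
open scoped Nat

section Algebra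

theorem degree_X_pow_card_sub_nodal_lt {R ι : Type*} [CommRing R] [Nontrivial R] (s : Finset ι)
    (v : ι → R) : (Polynomial.X ^ #s - Lagrange.nodal s v).degree < (#s : WithBot ℕ) := by
  have hdeg : (Polynomial.X ^ #s : Polynomial R).degree = #s := Polynomial.degree_X_pow _
  have := Polynomial.degree_sub_lt_left (hdeg.trans (Lagrange.degree_nodal (v := v)).symm)
    (Polynomial.monic_X_pow _).ne_zero (by simp [Lagrange.nodal_monic.leadingCoeff])
  rwa [hdeg] at this

variable {F : Type*} [Field F] [DecidableEq F]

/-- The divided difference of a function at the points of a finite set `S`, as a linear functional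
of the function. Indexing by a `Finset` makes the points distinct, so no denominator vanishes. -/
def dividedDifference (S : Finset F) : (F → F) →ₗ[F] F where
  toFun f := ∑ a ∈ S, f a / ∏ b ∈ S.erase a, (a - b)
  map_add' f g := by simp only [Pi.add_apply, add_div, sum_add_distrib]
  map_smul' c f := by
    simp only [Pi.smul_apply, smul_eq_mul, mul_div_assoc, mul_sum, RingHom.id_apply]

theorem dividedDifference_apply (S : Finset F) (f : F → F) :
    dividedDifference S f = ∑ a ∈ S, f a / ∏ b ∈ S.erase a, (a - b) :=
  rfl

theorem dividedDifference_congr {S : Finset F} {f g : F → F} (h : ∀ a ∈ S, f a = g a) :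
    dividedDifference S f = dividedDifference S g :=
  sum_congr rfl fun a ha ↦ by rw [h a ha]

theorem dividedDifference_map_univ {ι : Type*} [Fintype ι] [DecidableEq ι] (x : ι ↪ F)
    (f : F → F) :
    dividedDifference (univ.map x) f = ∑ k, f (x k) / ∏ i ∈ univ.erase k, (x k - x i) := by
  simp only [dividedDifference_apply, sum_map, ← map_erase, prod_map]

theorem dividedDifference_eval_of_degree_lt {S : Finset F} {p : Polynomial F}
    (hp : p.degree < #S) : dividedDifference S p.eval = p.coeff (#S - 1) :=
  (Lagrange.coeff_eq_sum (v := id) Function.injective_id.injOn hp).symm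

theorem dividedDifference_pow_card (S : Finset F) :
    dividedDifference S (fun t ↦ t ^ #S) = ∑ a ∈ S, a := by
  obtain rfl | hS := S.eq_empty_or_nonempty
  · simp [dividedDifference_apply]
  set N := Lagrange.nodal S id
  have hcoeff : N.coeff (#S - 1) = -∑ a ∈ S, a :=
    Polynomial.prod_X_sub_C_coeff_card_pred S id hS.card_pos
  have hNzero (a) (ha : a ∈ S) : N.eval a = 0 := Lagrange.eval_nodal_at_node (v := id) ha
  calc dividedDifference S (fun t ↦ t ^ #S)
      = dividedDifference S (Polynomial.X ^ #S - N).eval :=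
        dividedDifference_congr fun a ha ↦ by simp [hNzero a ha]
    _ = (Polynomial.X ^ #S - N).coeff (#S - 1) :=
        dividedDifference_eval_of_degree_lt (degree_X_pow_card_sub_nodal_lt S id)
    _ = ∑ a ∈ S, a := by
        have : #S - 1 ≠ #S := by have := hS.card_pos; lia
        rw [Polynomial.coeff_sub, hcoeff, Polynomial.coeff_X_pow, if_neg this, zero_sub, neg_neg]

end Algebra

section MeanValue

variable {I : Set ℝ} {f : ℝ → ℝ} {m : ℕ} {S : Finset ℝ}

theorem exists_card_eq_forall_derivWithin_eq_zero (hI : I.OrdConnected)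
    (hf : DifferentiableOn ℝ f I) (hSI : ↑S ⊆ I) (hS : #S = m + 1) (hzero : ∀ a ∈ S, f a = 0) :
    ∃ T : Finset ℝ, ↑T ⊆ I ∧ #T = m ∧ ∀ c ∈ T, derivWithin f I c = 0 := by
  set y : Fin (m + 1) ↪o ℝ := S.orderEmbOfFin hS
  have hyS (i) : y i ∈ S := S.orderEmbOfFin_mem hS i
  have hyI (i j) : Set.Icc (y i) (y j) ⊆ I := hI.out (hSI (hyS i)) (hSI (hyS j))
  have rolle (i : Fin m) : ∃ c ∈ Set.Ioo (y i.castSucc) (y i.succ), derivWithin f I c = 0 := by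
    refine exists_hasDerivAt_eq_zero (f := f) (y.strictMono i.castSucc_lt_succ)
      (hf.continuousOn.mono (hyI _ _)) (by rw [hzero _ (hyS _), hzero _ (hyS _)]) fun t ht ↦ ?_
    have hIt : I ∈ nhds t := Filter.mem_of_superset (Icc_mem_nhds ht.1 ht.2) (hyI _ _)
    exact (hf t (mem_of_mem_nhds hIt)).hasDerivWithinAt.hasDerivAt hIt
  choose c hc hc0 using rolle
  have hcmono : StrictMono c := fun i j hij ↦
    calc c i < y i.succ := (hc i).2
      _ ≤ y j.castSucc := y.monotone (Fin.succ_le_castSucc_iff.2 hij)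
      _ < c j := (hc j).1
  refine ⟨univ.map ⟨c, hcmono.injective⟩, ?_, by simp, by simpa using hc0⟩
  simpa [Set.range_subset_iff] using fun i ↦ hyI _ _ (Set.Ioo_subset_Icc_self (hc i))

theorem exists_iteratedDerivWithin_eq_zero (hI : I.OrdConnected) (hI' : UniqueDiffOn ℝ I)
    (hf : ContDiffOn ℝ m f I) (hSI : ↑S ⊆ I) (hS : #S = m + 1) (hzero : ∀ a ∈ S, f a = 0) :
    ∃ ξ ∈ I, iteratedDerivWithin m f I ξ = 0 := by
  induction m generalizing f S with
  | zero =>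
    obtain ⟨a, rfl⟩ := card_eq_one.1 hS
    exact ⟨a, by simpa using hSI, by simpa using hzero⟩
  | succ m ih =>
    obtain ⟨T, hTI, hT, hT0⟩ := exists_card_eq_forall_derivWithin_eq_zero hI
      (hf.differentiableOn (by simp)) hSI hS hzero
    rw [iteratedDerivWithin_succ']
    exact ih (hf.derivWithin hI' (by simp)) hTI hT hT0

theorem iteratedDerivWithin_eval_of_natDegree_le (hI : UniqueDiffOn ℝ I) {p : Polynomial ℝ}
    (hp : p.natDegree ≤ m) {t : ℝ} (ht : t ∈ I) :
    iteratedDerivWithin m p.eval I t = m ! * p.coeff m := by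
  induction m generalizing p with
  | zero =>
    rw [Polynomial.eq_C_of_natDegree_le_zero hp]
    simp
  | succ m ih =>
    have hderiv : Set.EqOn (derivWithin p.eval I) p.derivative.eval I := fun u hu ↦
      p.derivWithin (hI u hu)
    rw [iteratedDerivWithin_succ', iteratedDerivWithin_congr hderiv ht,
      ih (p.natDegree_derivative_le.trans (by lia)), Polynomial.coeff_derivative,
      Nat.factorial_succ]
    push_cast
    ring

theorem exists_iteratedDerivWithin_eq_factorial_mul_dividedDifference (hI : I.OrdConnected)
    (hI' : UniqueDiffOn ℝ I) (hf : ContDiffOn ℝ m f I) (hSI : ↑S ⊆ I) (hS : #S = m + 1) :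
    ∃ ξ ∈ I, iteratedDerivWithin m f I ξ = m ! * dividedDifference S f := by
  set p := Lagrange.interpolate S id f
  have hpdeg : p.degree < #S := Lagrange.degree_interpolate_lt f Function.injective_id.injOn
  have hpf (a) (ha : a ∈ S) : p.eval a = f a :=
    Lagrange.eval_interpolate_at_node (v := id) f Function.injective_id.injOn ha
  have hpsmooth : ContDiffOn ℝ m p.eval I :=
    (p.contDiff_aeval (R := ℝ) (𝕜 := ℝ) m).contDiffOn
  obtain ⟨ξ, hξ, hzero⟩ := exists_iteratedDerivWithin_eq_zero hI hI' (hf.sub hpsmooth) hSI hS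
    fun a ha ↦ sub_eq_zero.2 (hpf a ha).symm
  have hpm : p.natDegree ≤ m := by
    rw [hS] at hpdeg
    exact Polynomial.natDegree_le_of_degree_le (Order.lt_succ_iff.1 hpdeg)
  refine ⟨ξ, hξ, ?_⟩
  calc iteratedDerivWithin m f I ξ = iteratedDerivWithin m p.eval I ξ :=
        sub_eq_zero.1 ((iteratedDerivWithin_sub hξ hI' (hf ξ hξ) (hpsmooth ξ hξ)).symm.trans hzero)
    _ = m ! * p.coeff (#S - 1) := by
        rw [iteratedDerivWithin_eval_of_natDegree_le hI' hpm hξ, hS, Nat.add_sub_cancel]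
    _ = m ! * dividedDifference S f := by
        rw [← dividedDifference_eval_of_degree_lt hpdeg, dividedDifference_congr hpf]

theorem exists_forall_add_mul_sub_le_of_convexOn {μ : ℝ} (hf : ConvexOn ℝ I f)
    (hμ : μ ∈ interior I) : ∃ c, ∀ t ∈ I, f μ + c * (t - μ) ≤ f t := by
  refine ⟨derivWithin f (Set.Ioi μ) μ, fun t ht ↦ ?_⟩
  obtain htμ | rfl | hμt := lt_trichotomy t μ
  · have := (hf.slope_le_leftDeriv_of_mem_interior ht hμ htμ).trans
      (hf.leftDeriv_le_rightDeriv_of_mem_interior hμ)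
    rw [slope_def_field, div_le_iff₀ (sub_pos.2 htμ)] at this
    linarith
  · simp
  · have := hf.rightDeriv_le_slope_of_mem_interior hμ ht hμt
    rw [slope_def_field, le_div_iff₀ (sub_pos.2 hμt)] at this
    linarith

theorem mul_mean_add_le_factorial_mul_dividedDifference (hI : I.OrdConnected)
    (hI' : UniqueDiffOn ℝ I) (hf : ContDiffOn ℝ m f I) (hSI : ↑S ⊆ I) (hS : #S = m + 1) {c d : ℝ}
    (hcd : ∀ t ∈ I, c * t + d ≤ iteratedDerivWithin m f I t) :
    c * ((∑ a ∈ S, a) / #S) + d ≤ m ! * dividedDifference S f := by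
  set k : ℝ := c / (m + 1)!
  set P : ℝ → ℝ := fun t ↦ t ^ (m + 1)
  have hP : ContDiffOn ℝ m (k • P) I := by fun_prop
  obtain ⟨ξ, hξ, hmean⟩ : ∃ ξ ∈ I, iteratedDerivWithin m (f - k • P) I ξ = _ :=
    exists_iteratedDerivWithin_eq_factorial_mul_dividedDifference hI hI' (hf.sub hP) hSI hS
  have hderiv : iteratedDerivWithin m (f - k • P) I ξ = iteratedDerivWithin m f I ξ - c * ξ := by
    have hfac : (m + 1).descFactorial m = (m + 1)! := by
      simpa using Nat.factorial_mul_descFactorial m.le_succ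
    rw [iteratedDerivWithin_sub hξ hI' (hf ξ hξ) (hP ξ hξ), iteratedDerivWithin_const_smul_field,
      iteratedDerivWithin_pow hξ hI', hfac, Nat.add_sub_cancel_left, pow_one, smul_eq_mul,
      ← mul_assoc, div_mul_cancel₀ c (by positivity)]
  have hdiff : m ! * dividedDifference S (f - k • P) =
      m ! * dividedDifference S f - c * ((∑ a ∈ S, a) / #S) := by
    rw [map_sub, map_smul, show P = fun t ↦ t ^ #S by rw [hS], dividedDifference_pow_card, hS,
      smul_eq_mul, mul_sub]
    simp only [k, Nat.factorial_succ]
    push_cast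
    field_simp
  linarith [hcd ξ hξ]

theorem iteratedDerivWithin_mean_le_factorial_mul_dividedDifference (hI : IsOpen I)
    (hf : ContDiffOn ℝ m f I) (hconv : ConvexOn ℝ I (iteratedDerivWithin m f I))
    (hSI : ↑S ⊆ I) (hS : #S = m + 1) :
    iteratedDerivWithin m f I ((∑ a ∈ S, a) / #S) ≤ m ! * dividedDifference S f := by
  set g := iteratedDerivWithin m f I
  set μ := (∑ a ∈ S, a) / #S
  have hμ : μ ∈ I := by
    have := hconv.1.sum_mem (t := S) (w := fun _ ↦ (#S : ℝ)⁻¹) (z := id) (fun _ _ ↦ by positivity)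
      (by simp [hS, Nat.cast_add_one_ne_zero]) hSI
    simpa only [id_eq, smul_eq_mul, ← mul_sum, ← div_eq_inv_mul, ← sum_div] using this
  obtain ⟨c, hc⟩ := exists_forall_add_mul_sub_le_of_convexOn hconv (hI.interior_eq.symm ▸ hμ)
  have := mul_mean_add_le_factorial_mul_dividedDifference hconv.1.ordConnected hI.uniqueDiffOn hf
    hSI hS (c := c) (d := g μ - c * μ) fun t ht ↦ by linarith [hc t ht]
  linarith

end MeanValue

section PowMulLog

theorem iteratedDerivWithin_add_order {𝕜 E : Type*} [NontriviallyNormedField 𝕜]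
    [NormedAddCommGroup E] [NormedSpace 𝕜 E] (m n : ℕ) (f : 𝕜 → E) (s : Set 𝕜) :
    iteratedDerivWithin (m + n) f s = iteratedDerivWithin m (iteratedDerivWithin n f s) s := by
  induction n generalizing f with
  | zero => simp
  | succ n ih => rw [← add_assoc, iteratedDerivWithin_succ', ih, iteratedDerivWithin_succ']

theorem contDiffOn_pow_mul_log (j : ℕ) {n : WithTop ℕ∞} :
    ContDiffOn ℝ n (fun t ↦ t ^ j * Real.log t) (Set.Ioi 0) :=
  (contDiff_id.pow j).contDiffOn.mul (Real.contDiffOn_log.mono fun _ ht ↦ (Set.mem_Ioi.1 ht).ne')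

theorem derivWithin_pow_succ_mul_log (j : ℕ) :
    Set.EqOn (derivWithin (fun t ↦ t ^ (j + 1) * Real.log t) (Set.Ioi 0))
      (fun t ↦ (j + 1) * (t ^ j * Real.log t) + t ^ j) (Set.Ioi 0) := by
  intro t ht
  have ht0 : t ≠ 0 := (Set.mem_Ioi.1 ht).ne'
  refine ((hasDerivAt_pow (j + 1) t).mul (Real.hasDerivAt_log ht0)).hasDerivWithinAt.derivWithin
    (uniqueDiffOn_Ioi 0 t ht) |>.trans ?_
  rw [pow_succ, mul_assoc _ t, mul_inv_cancel₀ ht0]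
  push_cast
  ring

theorem iteratedDerivWithin_succ_pow_mul_log (j : ℕ) :
    Set.EqOn (iteratedDerivWithin (j + 1) (fun t ↦ t ^ j * Real.log t) (Set.Ioi 0))
      (fun t ↦ j ! * (1 / t)) (Set.Ioi 0) := by
  have hI := uniqueDiffOn_Ioi (0 : ℝ)
  induction j with
  | zero =>
    intro t ht
    have := (Real.hasDerivAt_log (Set.mem_Ioi.1 ht).ne').hasDerivWithinAt.derivWithin (hI t ht)
    simpa [iteratedDerivWithin_one] using this
  | succ j ih =>
    intro t ht
    have hpow : ContDiffWithinAt ℝ (j + 1 : ℕ) (fun t : ℝ ↦ t ^ j) (Set.Ioi 0) t := by fun_prop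
    have hlog := (contDiffOn_const (c := (j : ℝ) + 1)).mul
      (contDiffOn_pow_mul_log j (n := (j + 1 : ℕ))) t ht
    rw [iteratedDerivWithin_succ', iteratedDerivWithin_congr (derivWithin_pow_succ_mul_log j) ht,
      iteratedDerivWithin_fun_add ht hI hlog hpow, iteratedDerivWithin_const_mul_field, ih ht,
      iteratedDerivWithin_pow ht hI, Nat.descFactorial_of_lt j.lt_succ_self, Nat.factorial_succ]
    push_cast
    ring

theorem iteratedDerivWithin_add_succ_pow_mul_log (j r : ℕ) :
    Set.EqOn (iteratedDerivWithin (r + (j + 1)) (fun t ↦ t ^ j * Real.log t) (Set.Ioi 0))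
      (fun t ↦ (-1) ^ r * (j ! * r !) * t ^ (-1 - r : ℤ)) (Set.Ioi 0) := by
  intro t ht
  rw [iteratedDerivWithin_add_order,
    iteratedDerivWithin_congr (iteratedDerivWithin_succ_pow_mul_log j) ht,
    iteratedDerivWithin_const_mul_field, iteratedDerivWithin_one_div r isOpen_Ioi ht]
  ring

theorem iteratedDerivWithin_neg_one_pow_mul_pow_mul_log (j r : ℕ) :
    Set.EqOn
      (iteratedDerivWithin (r + (j + 1)) (fun t ↦ (-1) ^ r * (t ^ j * Real.log t)) (Set.Ioi 0))
      (fun t ↦ j ! * r ! * t ^ (-1 - r : ℤ)) (Set.Ioi 0) := by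
  intro t ht
  rw [iteratedDerivWithin_const_mul_field, iteratedDerivWithin_add_succ_pow_mul_log j r ht]
  beta_reduce
  rw [mul_assoc, ← mul_assoc, ← mul_pow, neg_one_mul, neg_neg, one_pow, one_mul]

theorem inv_mean_pow_le_dividedDifference_pow_mul_log {S : Finset ℝ} (hS : ∀ a ∈ S, 0 < a)
    {j r : ℕ} (hcard : #S = r + (j + 1) + 1) :
    j ! * r ! * (#S / ∑ a ∈ S, a) ^ (r + 1) ≤
      (r + (j + 1))! * ((-1) ^ r * dividedDifference S (fun t ↦ t ^ j * Real.log t)) := by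
  set f : ℝ → ℝ := fun t ↦ t ^ j * Real.log t
  have hderiv := iteratedDerivWithin_neg_one_pow_mul_pow_mul_log j r
  have hconv : ConvexOn ℝ (Set.Ioi 0)
      (iteratedDerivWithin (r + (j + 1)) (fun t ↦ (-1) ^ r * f t) (Set.Ioi 0)) :=
    ((convexOn_zpow (-1 - r)).smul (by positivity : (0 : ℝ) ≤ j ! * r !)).congr hderiv.symm
  have hne : S.Nonempty := card_pos.1 (by lia)
  have hmean : 0 < (∑ a ∈ S, a) / #S :=
    div_pos (sum_pos hS hne) (Nat.cast_pos.2 hne.card_pos)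
  have hpow : ((∑ a ∈ S, a) / #S) ^ (-1 - r : ℤ) = (#S / ∑ a ∈ S, a) ^ (r + 1) := by
    rw [show (-1 - r : ℤ) = -((r + 1 : ℕ) : ℤ) by push_cast; ring, zpow_neg, zpow_natCast,
      ← inv_pow, inv_div]
  calc j ! * r ! * (#S / ∑ a ∈ S, a) ^ (r + 1)
      = iteratedDerivWithin (r + (j + 1)) (fun t ↦ (-1) ^ r * f t) (Set.Ioi 0)
          ((∑ a ∈ S, a) / #S) := by
        rw [hderiv hmean, ← hpow]
    _ ≤ (r + (j + 1))! * dividedDifference S ((-1 : ℝ) ^ r • f) :=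
        iteratedDerivWithin_mean_le_factorial_mul_dividedDifference isOpen_Ioi
          (contDiffOn_const.mul (contDiffOn_pow_mul_log j)) hconv hS hcard
    _ = (r + (j + 1))! * ((-1) ^ r * dividedDifference S f) := by rw [map_smul, smul_eq_mul]

end PowMulLog

theorem stmt_2_general {ι : Type*} [Fintype ι] [DecidableEq ι] (x : ι → ℝ)
    (hpos : ∀ k, 0 < x k) (hdist : Function.Injective x)
    (q : ℕ) (hq1 : 1 ≤ q) (hq : q ≤ Fintype.card ι - 1) :
    (Fintype.card ι / ∑ k, x k) ^ (Fintype.card ι - q) / (q * (Fintype.card ι - 1).choose q) ≤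
      (-1 : ℝ) ^ (Fintype.card ι - q + 1) * ∑ k, (x k ^ (q - 1) * Real.log (x k)) /
        ∏ i ∈ univ.erase k, (x k - x i) := by
  obtain ⟨j, rfl⟩ : ∃ j, q = j + 1 := ⟨q - 1, by lia⟩
  obtain ⟨r, hr⟩ : ∃ r, Fintype.card ι = r + (j + 1) + 1 := ⟨Fintype.card ι - j - 2, by lia⟩
  have hchoose : ((j + 1 : ℕ) * (r + (j + 1)).choose (j + 1) : ℝ) * (j ! * r !) =
      (r + (j + 1))! := by
    rw [← Nat.add_choose_mul_factorial_mul_factorial r (j + 1), Nat.factorial_succ]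
    push_cast
    ring
  have hbound := inv_mean_pow_le_dividedDifference_pow_mul_log (S := univ.map ⟨x, hdist⟩)
    (by simpa using hpos) (j := j) (r := r) (by simpa using hr)
  rw [dividedDifference_map_univ, sum_map, card_map, Finset.card_univ, ← hchoose] at hbound
  have hD : (0 : ℝ) < (j + 1 : ℕ) * (r + (j + 1)).choose (j + 1) := by
    have := Nat.choose_pos (Nat.le_add_left (j + 1) r)
    positivity
  rw [show Fintype.card ι - (j + 1) = r + 1 by lia, show Fintype.card ι - 1 = r + (j + 1) by lia,
    div_le_iff₀' hD, Nat.add_sub_cancel, pow_add (-1 : ℝ) r 2, neg_one_sq, mul_one]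
  refine le_of_mul_le_mul_left ?_ (by positivity : (0 : ℝ) < j ! * r !)
  exact hbound.trans_eq (by simp only [Function.Embedding.coeFn_mk]; ring)

/-- The lower bound ∂S/∂s_{n−q+1} ≥ n^{n−q}/(q·C(n−1,q)) for the derivatives of the
Shannon entropy with respect to the elementary symmetric polynomials. -/
theorem stmt_2 (n : ℕ) (hn : 2 ≤ n) (x : Fin n → ℝ)
    (hpos : ∀ k, 0 < x k) (hdist : Function.Injective x)
    (hsum : ∑ k, x k = 1)
    (q : ℕ) (hq1 : 1 ≤ q) (hqn : q ≤ n - 1) :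
    (n : ℝ) ^ (n - q) / (q * ((n - 1).choose q)) ≤
      (-1 : ℝ) ^ (n - q + 1) * ∑ k, (x k ^ (q - 1) * Real.log (x k)) /
        ∏ i ∈ Finset.univ.erase k, (x k - x i) := by
  simpa [hsum] using stmt_2_general x hpos hdist q hq1 (by simpa using hqn)
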